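/- For every positive integer n, D_{ℝ,4n}(2) ≥ √(C(2n,n)) / (2√3/9)^n, where C(2n,n) is the central binomial coefficient. -/

import Mathlib

open MvPolynomial Filter

/-- The sup norm of a real polynomial in `n` variables over the cube `[-1,1]^n`. -/
noncomputable def supNorm {n : ℕ} (P : MvPolynomial (Fin n) ℝ) : ℝ :=
  sSup {y : ℝ | ∃ x : Fin n → ℝ, (∀ i, |x i| ≤ 1) ∧ y = |eval x P|}

/-- The `ℓ_p` norm of the coefficients of a real polynomial. -/
noncomputable def lpNorm {n : ℕ} (p : ℝ) (P : MvPolynomial (Fin n) ℝ) : ℝ :=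
  (∑ α ∈ P.support, |coeff α P| ^ p) ^ (1 / p)

/-- The real polynomial Bohnenblust–Hille constant `D_{ℝ,m}`. -/
noncomputable def BHconst (m : ℕ) : ℝ :=
  sInf {D : ℝ | 0 < D ∧ ∀ (n : ℕ) (P : MvPolynomial (Fin n) ℝ),
    P.IsHomogeneous m → lpNorm (2 * m / (m + 1)) P ≤ D * supNorm P}

/-- The real polynomial Bohnenblust–Hille constant `D_{ℝ,m}(n)` in a fixed number `n`
of variables. -/
noncomputable def BHconstN (m n : ℕ) : ℝ :=
  sInf {D : ℝ | 0 < D ∧ ∀ P : MvPolynomial (Fin n) ℝ,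
    P.IsHomogeneous m → lpNorm (2 * m / (m + 1)) P ≤ D * supNorm P}

/-- exponent vector. -/
noncomputable def expo (a b : ℕ) : Fin 2 →₀ ℕ := Finsupp.single 0 a + Finsupp.single 1 b

lemma expo_zero (a b : ℕ) : expo a b 0 = a := by simp [expo]

lemma expo_one (a b : ℕ) : expo a b 1 = b := by simp [expo]

lemma monomial_expo (a b : ℕ) (c : ℝ) :
    monomial (expo a b) c = C c * (X 0 ^ a * X 1 ^ b : MvPolynomial (Fin 2) ℝ) := by
  rw [X_pow_eq_monomial, X_pow_eq_monomial, monomial_mul, C_mul_monomial]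
  simp [expo]

lemma supNorm_bdd {n : ℕ} (P : MvPolynomial (Fin n) ℝ) :
    BddAbove {y : ℝ | ∃ x : Fin n → ℝ, (∀ i, |x i| ≤ 1) ∧ y = |eval x P|} := by
  refine ⟨∑ d ∈ P.support, |coeff d P|, ?_⟩
  rintro y ⟨x, hx, rfl⟩
  rw [eval_eq']
  refine (Finset.abs_sum_le_sum_abs _ _).trans (Finset.sum_le_sum fun d _ => ?_)
  rw [abs_mul, Finset.abs_prod]
  refine mul_le_of_le_one_right (abs_nonneg _) ?_
  refine Finset.prod_le_one (fun i _ => abs_nonneg _) fun i _ => ?_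
  rw [abs_pow]
  exact pow_le_one₀ (abs_nonneg _) (hx i)

lemma le_supNorm {n : ℕ} (P : MvPolynomial (Fin n) ℝ) (x : Fin n → ℝ) (hx : ∀ i, |x i| ≤ 1) :
    |eval x P| ≤ supNorm P :=
  le_csSup (supNorm_bdd P) ⟨x, hx, rfl⟩

lemma supp_homog (m : ℕ) (P : MvPolynomial (Fin 2) ℝ) (hP : P.IsHomogeneous m)
    (d : Fin 2 →₀ ℕ) (hd : d ∈ P.support) : ∃ j : Fin (m + 1), d = expo j (m - j) := by
  have h := hP (mem_support_iff.mp hd)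
  have h2 : d 0 + d 1 = m := by
    rw [← h, Finsupp.weight_apply, Finsupp.sum_fintype _ _ (by simp)]
    simp
  refine ⟨⟨d 0, by omega⟩, ?_⟩
  ext i
  fin_cases i
  · simp [expo]
  · simp [expo]; omega

lemma expo_inj (m : ℕ) : Function.Injective (fun j : Fin (m + 1) => expo j (m - j)) := by
  intro i j h
  have := congrArg (fun d => d 0) h
  simp only [expo_zero] at this
  exact Fin.ext this

lemma sum_supp (m : ℕ) (P : MvPolynomial (Fin 2) ℝ) (hP : P.IsHomogeneous m)
    (f : (Fin 2 →₀ ℕ) → ℝ) (hf : ∀ d, coeff d P = 0 → f d = 0) :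
    ∑ d ∈ P.support, f d = ∑ j : Fin (m + 1), f (expo j (m - j)) := by
  classical
  rw [← Finset.sum_image (s := Finset.univ) (f := f) (g := fun j : Fin (m + 1) => expo j (m - j))
    (fun i _ j _ h => expo_inj m h)]
  refine Finset.sum_subset ?_ ?_
  · intro d hd
    obtain ⟨j, rfl⟩ := supp_homog m P hP d hd
    exact Finset.mem_image_of_mem _ (Finset.mem_univ j)
  · intro d _ hd
    exact hf d (notMem_support_iff.mp hd)

lemma coeff_bound (m : ℕ) : ∃ B : ℝ, 0 < B ∧ ∀ P : MvPolynomial (Fin 2) ℝ,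
    P.IsHomogeneous m → ∀ d, |coeff d P| ≤ B * supNorm P := by
  classical
  let v : Fin (m + 1) → ℝ := fun i => (i : ℝ) / (m + 1)
  have hv : Function.Injective v := by
    intro i j h
    have h0 : (m + 1 : ℝ) ≠ 0 := by positivity
    simp only [v] at h
    field_simp at h
    exact Fin.ext (by exact_mod_cast h)
  have hv1 : ∀ i, |v i| ≤ 1 := by
    intro i
    have h0 : (0 : ℝ) < m + 1 := by positivity
    have : (i : ℝ) ≤ m + 1 := by exact_mod_cast i.2.le
    simp only [v]
    rw [abs_of_nonneg (by positivity), div_le_one h0]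
    exact this
  let V := Matrix.vandermonde v
  have hV : IsUnit V.det := (Matrix.det_vandermonde_ne_zero_iff.mpr hv).isUnit
  let B : ℝ := 1 + ∑ j, ∑ i, |V⁻¹ j i|
  have hB : 0 < B := by positivity
  refine ⟨B, hB, fun P hP d => ?_⟩
  have hs0 : 0 ≤ supNorm P := (abs_nonneg _).trans (le_supNorm P 0 (by simp))
  by_cases hd : d ∈ P.support
  swap
  · rw [notMem_support_iff.mp hd, abs_zero]; positivity
  obtain ⟨j, rfl⟩ := supp_homog m P hP d hd
  let a : Fin (m + 1) → ℝ := fun j => coeff (expo j (m - j)) P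
  have hVa : ∀ i, V.mulVec a i = eval ![v i, 1] P := by
    intro i
    rw [eval_eq', sum_supp m P hP _ (by intro d hd; simp [hd])]
    simp only [Matrix.mulVec, dotProduct, V, Matrix.vandermonde_apply, a, Fin.prod_univ_two,
      expo_zero, expo_one]
    refine Finset.sum_congr rfl fun k _ => ?_
    simp [mul_comm]
  have ha : a = V⁻¹.mulVec (V.mulVec a) := by
    rw [Matrix.mulVec_mulVec, Matrix.nonsing_inv_mul _ hV, Matrix.one_mulVec]
  have haj : a j = ∑ i, V⁻¹ j i * eval ![v i, 1] P := by
    conv_lhs => rw [ha]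
    simp only [Matrix.mulVec, dotProduct]
    refine Finset.sum_congr rfl fun i _ => ?_
    rw [← hVa i]; rfl
  change |a j| ≤ _
  rw [haj]
  calc |∑ i, V⁻¹ j i * eval ![v i, 1] P| ≤ ∑ i, |V⁻¹ j i| * supNorm P := by
        refine (Finset.abs_sum_le_sum_abs _ _).trans (Finset.sum_le_sum fun i _ => ?_)
        rw [abs_mul]
        refine mul_le_mul_of_nonneg_left (le_supNorm P _ ?_) (abs_nonneg _)
        intro k
        fin_cases k
        · simpa using hv1 i
        · simp
    _ = (∑ i, |V⁻¹ j i|) * supNorm P := by rw [Finset.sum_mul]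
    _ ≤ B * supNorm P := by
        refine mul_le_mul_of_nonneg_right ?_ hs0
        have := Finset.single_le_sum (f := fun j => ∑ i, |V⁻¹ j i|)
          (fun j _ => Finset.sum_nonneg fun i _ => abs_nonneg _) (Finset.mem_univ j)
        simp only [B]
        linarith

lemma BH_nonempty (m : ℕ) (p : ℝ) (hp : 0 < p) : ∃ D : ℝ, 0 < D ∧
    ∀ P : MvPolynomial (Fin 2) ℝ, P.IsHomogeneous m → lpNorm p P ≤ D * supNorm P := by
  obtain ⟨B, hB, h⟩ := coeff_bound m
  refine ⟨((m + 1 : ℕ) : ℝ) ^ (1 / p) * B, by positivity, fun P hP => ?_⟩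
  have hs0 : 0 ≤ supNorm P := (abs_nonneg _).trans (le_supNorm P 0 (by simp))
  unfold lpNorm
  rw [sum_supp m P hP _ (by intro d hd; simp [hd, hp.ne'])]
  calc (∑ j : Fin (m + 1), |coeff (expo j (m - j)) P| ^ p) ^ (1 / p)
      ≤ (∑ j : Fin (m + 1), (B * supNorm P) ^ p) ^ (1 / p) := by
        refine Real.rpow_le_rpow (Finset.sum_nonneg fun i _ => by positivity) ?_ (by positivity)
        exact Finset.sum_le_sum fun j _ => Real.rpow_le_rpow (abs_nonneg _) (h P hP _) hp.le
    _ = _ := by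
        rw [Finset.sum_const, Finset.card_univ, Fintype.card_fin, nsmul_eq_mul,
          Real.mul_rpow (by positivity) (by positivity), ← Real.rpow_mul (by positivity),
          mul_one_div_cancel hp.ne', Real.rpow_one, mul_assoc]

lemma l2_le_lp {ι : Type*} (s : Finset ι) (a : ι → ℝ) (ha : ∀ i, 0 ≤ a i) (p : ℝ) (hp : 0 < p)
    (hp2 : p ≤ 2) : Real.sqrt (∑ i ∈ s, a i ^ 2) ≤ (∑ i ∈ s, a i ^ p) ^ (1 / p) := by
  set T := ∑ i ∈ s, a i ^ p with hT
  have hT0 : 0 ≤ T := Finset.sum_nonneg fun i _ => Real.rpow_nonneg (ha i) _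
  set S := T ^ (1 / p) with hS
  have hS0 : 0 ≤ S := Real.rpow_nonneg hT0 _
  have hSp : S ^ p = T := by
    rw [hS, ← Real.rpow_mul hT0, one_div_mul_cancel hp.ne', Real.rpow_one]
  have hle : ∀ i ∈ s, a i ≤ S := by
    intro i hi
    rw [← Real.rpow_le_rpow_iff (ha i) hS0 hp, hSp]
    exact Finset.single_le_sum (f := fun i => a i ^ p)
      (fun i _ => Real.rpow_nonneg (ha i) _) hi
  have key : ∀ x : ℝ, 0 ≤ x → x ^ 2 = x ^ p * x ^ (2 - p) := by
    intro x hx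
    rw [← Real.rpow_add_of_nonneg hx hp.le (by linarith)]
    norm_num
  apply Real.sqrt_le_iff.mpr ⟨hS0, ?_⟩
  calc ∑ i ∈ s, a i ^ 2 ≤ ∑ i ∈ s, a i ^ p * S ^ (2 - p) := by
        refine Finset.sum_le_sum fun i hi => ?_
        rw [key _ (ha i)]
        exact mul_le_mul_of_nonneg_left
          (Real.rpow_le_rpow (ha i) (hle i hi) (by linarith)) (Real.rpow_nonneg (ha i) _)
    _ = S ^ 2 := by rw [← Finset.sum_mul, ← hT, key S hS0, hSp]

/-- the extremal quartic. -/
noncomputable def P4 : MvPolynomial (Fin 2) ℝ := X 0 ^ 3 * X 1 - X 0 * X 1 ^ 3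

lemma P4_homog : P4.IsHomogeneous 4 := by
  unfold P4
  refine IsHomogeneous.sub ?_ ?_
  · exact (isHomogeneous_X_pow 0 3).mul (isHomogeneous_X ℝ 1)
  · exact (isHomogeneous_X ℝ 0).mul (isHomogeneous_X_pow 1 3)

lemma quartic_aux (a b : ℝ) (hb : 0 ≤ b) (hab : b ≤ a) (ha : a ≤ 1) :
    a * b * (a - b) ^ 2 ≤ 4 / 27 := by
  have h1 : 27 * (b * (a - b) ^ 2) ≤ 4 * a ^ 3 := by
    have : 0 ≤ (a - 3 * b) ^ 2 * (4 * a - 3 * b) :=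
      mul_nonneg (sq_nonneg _) (by linarith)
    nlinarith
  have ha0 : 0 ≤ a := hb.trans hab
  have h2 : a ^ 4 ≤ 1 := pow_le_one₀ ha0 ha
  nlinarith [mul_le_mul_of_nonneg_left h1 ha0]

lemma P4_bound (x : Fin 2 → ℝ) (hx : ∀ i, |x i| ≤ 1) : |eval x P4| ≤ 2 * Real.sqrt 3 / 9 := by
  have e : eval x P4 = x 0 ^ 3 * x 1 - x 0 * x 1 ^ 3 := by simp [P4]
  rw [e]
  have h0 : x 0 ^ 2 ≤ 1 := (sq_le_one_iff_abs_le_one _).mpr (hx 0)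
  have h1 : x 1 ^ 2 ≤ 1 := (sq_le_one_iff_abs_le_one _).mpr (hx 1)
  apply abs_le_of_sq_le_sq _ (by positivity)
  have h3 : (2 * Real.sqrt 3 / 9) ^ 2 = 4 / 27 := by
    rw [div_pow, mul_pow, Real.sq_sqrt (by norm_num)]; norm_num
  rw [h3]
  rcases le_total (x 1 ^ 2) (x 0 ^ 2) with h | h
  · have := quartic_aux _ _ (sq_nonneg _) h h0
    calc _ = _ := by ring
      _ ≤ _ := this
  · have := quartic_aux _ _ (sq_nonneg _) h h1
    calc _ = _ := by ring
      _ ≤ _ := this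

lemma P4_pow_expand (n : ℕ) : P4 ^ n = ∑ k ∈ Finset.range (n + 1),
    monomial (expo (n + 2 * k) (n + 2 * (n - k))) ((-1) ^ (n - k) * (n.choose k : ℝ)) := by
  have : P4 = (X 0 * X 1) * (X 0 ^ 2 + (- X 1 ^ 2)) := by unfold P4; ring
  rw [this, mul_pow, add_pow, Finset.mul_sum]
  refine Finset.sum_congr rfl fun k _ => ?_
  rw [monomial_expo, neg_pow (X 1 ^ 2 : MvPolynomial (Fin 2) ℝ)]
  simp only [map_mul, map_pow, map_neg, map_one, map_natCast]
  ring

lemma P4_coeff (n k : ℕ) (hk : k ∈ Finset.range (n + 1)) :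
    coeff (expo (n + 2 * k) (n + 2 * (n - k))) (P4 ^ n) = (-1) ^ (n - k) * (n.choose k : ℝ) := by
  classical
  rw [P4_pow_expand, coeff_sum, Finset.sum_eq_single k]
  · rw [coeff_monomial, if_pos rfl]
  · intro j _ hj
    rw [coeff_monomial, if_neg]
    intro h
    have := congrArg (fun d => d 0) h
    simp only [expo_zero] at this
    omega
  · intro h; exact absurd hk h

lemma P4_l2 (n : ℕ) : ((2 * n).choose n : ℝ) ≤ ∑ d ∈ (P4 ^ n).support, |coeff d (P4 ^ n)| ^ 2 := by
  classical
  have h1 : ((2 * n).choose n : ℝ) = ∑ k ∈ Finset.range (n + 1), (n.choose k : ℝ) ^ 2 := by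
    exact_mod_cast (Nat.sum_range_choose_sq n).symm
  rw [h1]
  have h2 : ∑ k ∈ Finset.range (n + 1), (n.choose k : ℝ) ^ 2 =
      ∑ d ∈ (Finset.range (n + 1)).image (fun k => expo (n + 2 * k) (n + 2 * (n - k))),
        |coeff d (P4 ^ n)| ^ 2 := by
    rw [Finset.sum_image]
    · refine Finset.sum_congr rfl fun k hk => ?_
      rw [P4_coeff n k hk, sq_abs, mul_pow, ← pow_mul, mul_comm (n - k) 2, pow_mul]
      simp
    · intro i _ j _ h
      have := congrArg (fun d => d 0) h
      simp only [expo_zero] at this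
      omega
  rw [h2]
  refine Finset.sum_le_sum_of_subset_of_nonneg ?_ fun _ _ _ => by positivity
  intro d hd
  obtain ⟨k, hk, rfl⟩ := Finset.mem_image.mp hd
  rw [mem_support_iff, P4_coeff n k hk]
  have : n.choose k ≠ 0 := (Nat.choose_pos (by simpa [Nat.lt_succ_iff] using hk)).ne'
  have h' : (n.choose k : ℝ) ≠ 0 := by exact_mod_cast this
  exact mul_ne_zero (pow_ne_zero _ (by norm_num)) h'

/-- For every positive integer `n`, `D_{ℝ,4n}(2) ≥ √(C(2n,n)) / (2√3/9)^n`. -/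
theorem real_BH_lower_two_vars (n : ℕ) (hn : 0 < n) :
    Real.sqrt (Nat.choose (2 * n) n) / (2 * Real.sqrt 3 / 9) ^ n ≤ BHconstN (4 * n) 2 := by
  have hn' : (0 : ℝ) < n := by exact_mod_cast hn
  have hp : (0 : ℝ) < 2 * ((4 * n : ℕ) : ℝ) / (((4 * n : ℕ) : ℝ) + 1) := by
    push_cast; positivity
  have hp2 : 2 * ((4 * n : ℕ) : ℝ) / (((4 * n : ℕ) : ℝ) + 1) ≤ 2 := by
    rw [div_le_iff₀ (by positivity)]; linarith
  unfold BHconstN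
  refine le_csInf (BH_nonempty (4 * n) _ hp) ?_
  rintro D ⟨hD, h⟩
  have h1 := h (P4 ^ n) (P4_homog.pow n)
  have h2 : supNorm (P4 ^ n) ≤ (2 * Real.sqrt 3 / 9) ^ n := by
    refine csSup_le ⟨_, 0, by simp, rfl⟩ ?_
    rintro y ⟨x, hx, rfl⟩
    rw [map_pow, abs_pow]
    exact pow_le_pow_left₀ (abs_nonneg _) (P4_bound x hx) n
  rw [div_le_iff₀ (by positivity)]
  calc Real.sqrt (Nat.choose (2 * n) n)
      ≤ Real.sqrt (∑ d ∈ (P4 ^ n).support, |coeff d (P4 ^ n)| ^ 2) :=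
        Real.sqrt_le_sqrt (P4_l2 n)
    _ ≤ lpNorm _ (P4 ^ n) := l2_le_lp _ _ (fun _ => abs_nonneg _) _ hp hp2
    _ ≤ D * supNorm (P4 ^ n) := h1
    _ ≤ _ := mul_le_mul_of_nonneg_left h2 hD.le
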